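/- Let $f : \mathbb{D} \to \Omega$ be a conformal (holomorphic injective) map from the unit disc onto a domain $\Omega \subseteq \mathbb{C}$ with $f(0) = z$. Then $\tfrac{1}{4}|f'(0)| \le \operatorname{dist}(z, \partial\Omega) \le |f'(0)|$. -/

import Mathlib

open Metric

/-!
The upper bound is the Schwarz lemma for the inverse map. For the lower bound, the engine is the
logarithmic area `|dw|² / |w|²`. Let `T` be univalent on a disc of radius `R` about `c`, with
`T c = 0` and `T x * T y ≠ 1` throughout. The image of the annulus `r < |z - c| < R` has
logarithmic area at least `2π log (R / r)`, by the mean value property, and is disjoint from its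
inversion, which has the same logarithmic area. Both lie in an annulus `ρ < |w| < ρ⁻¹` with
`ρ / r` as close to `|deriv T c|` as desired, and comparing areas gives `R |deriv T c| ≤ 1`.
If `h` is univalent and `h x + h y` never vanishes, then `T = (h - h c) / (h + h c)` is such a
map; if `f` is univalent and omits `w`, then a branch of `√(f - w)` is such an `h`. Unwinding the
derivatives gives `R |deriv f c| ≤ 4 |f c - w|`.
-/

open Set Filter Topology MeasureTheory Function
open scoped ENNReal Pointwise Real

/-! ### Univalent functions -/

section Univalent

variable {f : ℂ → ℂ} {U : Set ℂ} {x : ℂ}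

theorem map_nhds_eq_of_injOn (hU : IsOpen U) (hf : DifferentiableOn ℂ f U) (hinj : InjOn f U)
    (hx : x ∈ U) : map f (𝓝 x) = 𝓝 (f x) := by
  refine le_antisymm (hf.differentiableAt (hU.mem_nhds hx)).continuousAt ?_
  refine (hf.analyticAt (hU.mem_nhds hx)).eventually_constant_or_nhds_le_map_nhds.resolve_left
    fun hconst ↦ ?_
  have hfalse : ∀ᶠ _ in 𝓝[≠] x, False := by
    filter_upwards [hconst.filter_mono nhdsWithin_le_nhds, nhdsWithin_le_nhds (hU.mem_nhds hx),
      self_mem_nhdsWithin] with y hy hyU hyx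
    exact hyx (hinj hyU hx hy)
  exact hfalse.exists.elim fun _ ↦ id

theorem isOpen_image_of_injOn (hU : IsOpen U) (hf : DifferentiableOn ℂ f U) (hinj : InjOn f U) :
    IsOpen (f '' U) := by
  rw [isOpen_iff_mem_nhds]
  rintro _ ⟨x, hx, rfl⟩
  exact map_nhds_eq_of_injOn hU hf hinj hx ▸ image_mem_map (hU.mem_nhds hx)

theorem continuousAt_invFunOn_of_injOn (hU : IsOpen U) (hf : DifferentiableOn ℂ f U)
    (hinj : InjOn f U) (hx : x ∈ U) : ContinuousAt (invFunOn f U) (f x) := by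
  rw [ContinuousAt, hinj.leftInvOn_invFunOn hx, ← map_nhds_eq_of_injOn hU hf hinj hx,
    tendsto_map'_iff]
  refine tendsto_id.congr' ?_
  filter_upwards [hU.mem_nhds hx] with y hy
  exact (hinj.leftInvOn_invFunOn hy).symm

theorem eventually_deriv_ne_zero_of_injOn (hU : IsOpen U) (hf : DifferentiableOn ℂ f U)
    (hinj : InjOn f U) (hx : x ∈ U) : ∀ᶠ y in 𝓝[≠] x, deriv f y ≠ 0 := by
  refine (hf.deriv hU).analyticAt (hU.mem_nhds hx)
    |>.eventually_eq_zero_or_eventually_ne_zero.resolve_left fun hzero ↦ ?_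
  obtain ⟨ε, hε, hball⟩ := Metric.eventually_nhds_iff_ball.1 (hzero.and (hU.mem_nhds hx))
  obtain ⟨y, hy, hyx⟩ : (ball x ε ∩ {x}ᶜ).Nonempty := nonempty_of_mem <|
    inter_mem (mem_nhdsWithin_of_mem_nhds (ball_mem_nhds x hε)) self_mem_nhdsWithin
  refine hyx (hinj (hball y hy).2 hx ?_)
  exact isOpen_ball.is_const_of_deriv_eq_zero (convex_ball x ε).isPreconnected
    (hf.mono fun z hz ↦ (hball z hz).2) (fun z hz ↦ (hball z hz).1) hy (mem_ball_self hε)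

/- The inverse is differentiable off the critical values of `f`, which are isolated, and
continuous at them, so they are removable. -/
theorem differentiableAt_invFunOn_of_injOn (hU : IsOpen U) (hf : DifferentiableOn ℂ f U)
    (hinj : InjOn f U) (hx : x ∈ U) : DifferentiableAt ℂ (invFunOn f U) (f x) := by
  refine (Complex.analyticAt_of_differentiable_on_punctured_nhds_of_continuousAt ?_
    (continuousAt_invFunOn_of_injOn hU hf hinj hx)).differentiableAt
  have hregular := eventually_deriv_ne_zero_of_injOn hU hf hinj hx
  rw [eventually_nhdsWithin_iff] at hregular ⊢
  rw [← map_nhds_eq_of_injOn hU hf hinj hx, eventually_map]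
  filter_upwards [hregular, hU.mem_nhds hx] with y hy hyU hne
  refine (HasDerivAt.of_local_left_inverse (f := f) (f' := deriv f y)
    (continuousAt_invFunOn_of_injOn hU hf hinj hyU) ?_ (hy fun h ↦ hne (congrArg f h))
    ?_).differentiableAt
  · rw [hinj.leftInvOn_invFunOn hyU]
    exact (hf.differentiableAt (hU.mem_nhds hyU)).hasDerivAt
  · filter_upwards [(isOpen_image_of_injOn hU hf hinj).mem_nhds (mem_image_of_mem f hyU)] with w hw
    exact invFunOn_eq hw

theorem deriv_invFunOn_mul_deriv_of_injOn (hU : IsOpen U) (hf : DifferentiableOn ℂ f U)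
    (hinj : InjOn f U) (hx : x ∈ U) : deriv (invFunOn f U) (f x) * deriv f x = 1 := by
  have hcomp := (differentiableAt_invFunOn_of_injOn hU hf hinj hx).hasDerivAt.comp x
    (hf.differentiableAt (hU.mem_nhds hx)).hasDerivAt
  refine hcomp.unique ((hasDerivAt_id x).congr_of_eventuallyEq ?_)
  filter_upwards [hU.mem_nhds hx] with y hy
  exact hinj.leftInvOn_invFunOn hy

theorem deriv_ne_zero_of_injOn (hU : IsOpen U) (hf : DifferentiableOn ℂ f U) (hinj : InjOn f U)
    (hx : x ∈ U) : deriv f x ≠ 0 :=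
  right_ne_zero_of_mul_eq_one (deriv_invFunOn_mul_deriv_of_injOn hU hf hinj hx)

theorem dslope_ne_zero_of_injOn (hU : IsOpen U) (hf : DifferentiableOn ℂ f U) (hinj : InjOn f U)
    (hx : x ∈ U) {y : ℂ} (hy : y ∈ U) : dslope f x y ≠ 0 := by
  rcases eq_or_ne y x with rfl | hyx
  · rw [dslope_same]
    exact deriv_ne_zero_of_injOn hU hf hinj hx
  · rw [dslope_of_ne f hyx]
    exact fun h ↦ hyx (hinj hy hx (slope_eq_zero_iff.1 h).symm)

end Univalent

theorem le_mul_norm_deriv_of_ball_subset_image {f : ℂ → ℂ} {c : ℂ} {R d : ℝ} (hR : 0 < R)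
    (hf : DifferentiableOn ℂ f (ball c R)) (hinj : InjOn f (ball c R))
    (hsub : ball (f c) d ⊆ f '' ball c R) : d ≤ R * ‖deriv f c‖ := by
  rcases le_or_gt d 0 with hd | hd
  · exact hd.trans (by positivity)
  have hc : c ∈ ball c R := mem_ball_self hR
  have hdiff : DifferentiableOn ℂ (invFunOn f (ball c R)) (ball (f c) d) := by
    intro y hy
    obtain ⟨x, hx, rfl⟩ := hsub hy
    exact (differentiableAt_invFunOn_of_injOn isOpen_ball hf hinj hx).differentiableWithinAt
  have hmaps : MapsTo (invFunOn f (ball c R)) (ball (f c) d)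
      (closedBall (invFunOn f (ball c R) (f c)) R) := by
    rw [hinj.leftInvOn_invFunOn hc]
    exact fun y hy ↦ ball_subset_closedBall (invFunOn_mem (hsub hy))
  have hschwarz := Complex.norm_deriv_le_div_of_mapsTo_ball hdiff hmaps hd
  calc d = d * ‖deriv (invFunOn f (ball c R)) (f c) * deriv f c‖ := by
        rw [deriv_invFunOn_mul_deriv_of_injOn isOpen_ball hf hinj hc, norm_one, mul_one]
    _ = d * ‖deriv (invFunOn f (ball c R)) (f c)‖ * ‖deriv f c‖ := by rw [norm_mul, mul_assoc]
    _ ≤ R * ‖deriv f c‖ := by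
        gcongr
        rwa [mul_comm, ← le_div_iff₀ hd]

theorem ball_infDist_frontier_subset {E : Type*} [NormedAddCommGroup E] [NormedSpace ℝ E]
    [FiniteDimensional ℝ E] {s : Set E} {x : E} (hx : x ∈ s) :
    ball x (infDist x (frontier s)) ⊆ s := by
  rcases eq_or_ne s univ with rfl | hs
  · exact subset_univ _
  obtain ⟨y, hy, hxy⟩ := exists_mem_frontier_infDist_compl_eq_dist hx hs
  exact (ball_subset_ball (hxy ▸ infDist_le_dist_of_mem hy)).trans ball_infDist_compl_subset

theorem infDist_frontier_image_ball_le {f : ℂ → ℂ} {c : ℂ} {R : ℝ} (hR : 0 < R)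
    (hf : DifferentiableOn ℂ f (ball c R)) (hinj : InjOn f (ball c R)) :
    infDist (f c) (frontier (f '' ball c R)) ≤ R * ‖deriv f c‖ :=
  le_mul_norm_deriv_of_ball_subset_image hR hf hinj
    (ball_infDist_frontier_subset (mem_image_of_mem f (mem_ball_self hR)))

theorem image_ball_ne_univ_of_injOn {f : ℂ → ℂ} {c : ℂ} {R : ℝ} (hR : 0 < R)
    (hf : DifferentiableOn ℂ f (ball c R)) (hinj : InjOn f (ball c R)) :
    f '' ball c R ≠ univ := fun huniv ↦
  (lt_add_one (R * ‖deriv f c‖)).not_ge <|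
    le_mul_norm_deriv_of_ball_subset_image hR hf hinj (huniv ▸ subset_univ _)

/-! ### Integration over annuli -/

/-- The open annulus `a < dist z c < b`, written as a difference of two concentric discs. -/
def openAnnulus (c : ℂ) (a b : ℝ) : Set ℂ := ball c b \ closedBall c a

theorem isOpen_openAnnulus (c : ℂ) (a b : ℝ) : IsOpen (openAnnulus c a b) :=
  isOpen_ball.sdiff isClosed_closedBall

theorem openAnnulus_subset_ball (c : ℂ) (a b : ℝ) : openAnnulus c a b ⊆ ball c b :=
  sdiff_subset

theorem circleMap_mem_openAnnulus_iff {c : ℂ} {a b ρ θ : ℝ} (hρ : 0 ≤ ρ) :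
    circleMap c ρ θ ∈ openAnnulus c a b ↔ ρ ∈ Ioo a b := by
  simp [openAnnulus, dist_eq_norm, abs_of_nonneg hρ, and_comm]

theorem lintegral_eq_lintegral_circleMap (c : ℂ) {G : ℂ → ℝ≥0∞} (hG : Measurable G) :
    ∫⁻ z, G z =
      ∫⁻ ρ in Ioi (0 : ℝ), ENNReal.ofReal ρ * ∫⁻ θ in Ioo (-π) π, G (circleMap c ρ θ) := by
  have hpolar (p : ℝ × ℝ) : c + Complex.polarCoord.symm p = circleMap c p.1 p.2 := by
    simp [circleMap, Complex.exp_mul_I]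
  have hcircle : Measurable fun p : ℝ × ℝ ↦ circleMap c p.1 p.2 := by
    unfold circleMap
    fun_prop
  calc ∫⁻ z, G z
    _ = ∫⁻ p in Ioi (0 : ℝ) ×ˢ Ioo (-π) π, ENNReal.ofReal p.1 * G (circleMap c p.1 p.2) := by
        rw [← lintegral_add_left_eq_self G c, ← Complex.lintegral_comp_polarCoord_symm]
        simp_rw [hpolar, smul_eq_mul]
        rfl
    _ = ∫⁻ ρ in Ioi (0 : ℝ), ENNReal.ofReal ρ * ∫⁻ θ in Ioo (-π) π, G (circleMap c ρ θ) := by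
        rw [Measure.volume_eq_prod, ← Measure.prod_restrict, lintegral_prod _ (by fun_prop)]
        simp_rw [lintegral_const_mul' _ _ ENNReal.ofReal_ne_top]

theorem lintegral_openAnnulus {c : ℂ} {a b : ℝ} {F : ℂ → ℝ≥0∞} (ha : 0 ≤ a)
    (hF : Measurable ((openAnnulus c a b).indicator F)) :
    ∫⁻ z in openAnnulus c a b, F z =
      ∫⁻ ρ in Ioo a b, ENNReal.ofReal ρ * ∫⁻ θ in Ioo (-π) π, F (circleMap c ρ θ) := by
  rw [← lintegral_indicator (isOpen_openAnnulus c a b).measurableSet,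
    lintegral_eq_lintegral_circleMap c hF, ← lintegral_indicator measurableSet_Ioi,
    ← lintegral_indicator measurableSet_Ioo]
  congr! 2 with ρ
  by_cases hρ : ρ ∈ Ioo a b
  · have hρ0 : 0 < ρ := ha.trans_lt hρ.1
    simp [hρ, hρ0, indicator, circleMap_mem_openAnnulus_iff hρ0.le]
  · rcases le_or_gt ρ 0 with hρ0 | hρ0
    · simp [hρ, hρ0]
    · simp [hρ, hρ0, indicator, circleMap_mem_openAnnulus_iff hρ0.le]

theorem lintegral_openAnnulus_enorm_inv_sq_mul {c : ℂ} {a b : ℝ} {F : ℂ → ℝ≥0∞} (ha : 0 ≤ a)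
    (hF : Measurable ((openAnnulus c a b).indicator F)) :
    ∫⁻ z in openAnnulus c a b, ‖(z - c)⁻¹‖ₑ ^ 2 * F z =
      ∫⁻ ρ in Ioo a b, ENNReal.ofReal ρ⁻¹ * ∫⁻ θ in Ioo (-π) π, F (circleMap c ρ θ) := by
  have hweighted : ((openAnnulus c a b).indicator fun z ↦ ‖(z - c)⁻¹‖ₑ ^ 2 * F z) =
      fun z ↦ ‖(z - c)⁻¹‖ₑ ^ 2 * (openAnnulus c a b).indicator F z :=
    funext fun _ ↦ indicator_mul_right _ _ _
  rw [lintegral_openAnnulus ha (hweighted ▸ by fun_prop)]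
  refine setLIntegral_congr_fun measurableSet_Ioo fun ρ hρ ↦ ?_
  have hρ0 : 0 < ρ := ha.trans_lt hρ.1
  have hnorm (θ : ℝ) : ‖(circleMap c ρ θ - c)⁻¹‖ₑ = ENNReal.ofReal ρ⁻¹ := by
    rw [← ofReal_norm, norm_inv, circleMap_sub_center, norm_circleMap_zero,
      abs_of_pos hρ0]
  simp_rw [hnorm, lintegral_const_mul' _ _ (ENNReal.pow_ne_top ENNReal.ofReal_ne_top),
    ← mul_assoc, ← ENNReal.ofReal_pow (inv_nonneg.2 hρ0.le), ← ENNReal.ofReal_mul hρ0.le]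
  congr 2
  field_simp

theorem lintegral_Ioo_ofReal_inv {a b : ℝ} (ha : 0 < a) (hab : a ≤ b) :
    ∫⁻ ρ in Ioo a b, ENNReal.ofReal ρ⁻¹ = ENNReal.ofReal (Real.log (b / a)) := by
  have hint : IntervalIntegrable (fun ρ : ℝ ↦ ρ⁻¹) volume a b :=
    intervalIntegrable_inv_iff.2 (.inr fun h ↦ (uIcc_of_le hab ▸ h).1.not_gt ha)
  rw [restrict_Ioo_eq_restrict_Ioc, ← ofReal_integral_eq_lintegral_ofReal hint.1,
    ← intervalIntegral.integral_of_le hab, integral_inv_of_pos ha (ha.trans_le hab)]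
  filter_upwards [ae_restrict_mem measurableSet_Ioc] with ρ hρ
  exact inv_nonneg.2 (ha.trans hρ.1).le

theorem enorm_le_lintegral_enorm_circleMap {E : Type*} [NormedAddCommGroup E] [NormedSpace ℂ E]
    [CompleteSpace E] {q : ℂ → E} {c : ℂ} {ρ : ℝ} (hq : DiffContOnCl ℂ q (ball c |ρ|)) :
    ENNReal.ofReal (2 * π) * ‖q c‖ₑ ≤ ∫⁻ θ in Ioo (-π) π, ‖q (circleMap c ρ θ)‖ₑ := by
  have hmean : (2 * π) • q c = ∫ θ in Ioo (-π) π, q (circleMap c ρ θ) := by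
    rw [← hq.circleAverage, Real.circleAverage_eq_integral_add (-π),
      smul_inv_smul₀ Real.two_pi_pos.ne',
      intervalIntegral.integral_comp_add_right (fun θ ↦ q (circleMap c ρ θ)),
      intervalIntegral.integral_of_le (by linarith [Real.pi_pos]), integral_Ioc_eq_integral_Ioo]
    ring_nf
  calc ENNReal.ofReal (2 * π) * ‖q c‖ₑ = ‖(2 * π) • q c‖ₑ := by
        rw [enorm_smul, Real.enorm_of_nonneg Real.two_pi_pos.le]
    _ ≤ ∫⁻ θ in Ioo (-π) π, ‖q (circleMap c ρ θ)‖ₑ :=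
        hmean ▸ enorm_integral_le_lintegral_enorm _

theorem ofReal_log_mul_enorm_le_lintegral_openAnnulus {E : Type*} [NormedAddCommGroup E]
    [NormedSpace ℂ E] [CompleteSpace E] {q : ℂ → E} {c : ℂ} {a b : ℝ} (ha : 0 < a) (hab : a ≤ b)
    (hq : DifferentiableOn ℂ q (ball c b)) :
    ENNReal.ofReal (2 * π * Real.log (b / a)) * ‖q c‖ₑ ≤
      ∫⁻ z in openAnnulus c a b, ‖(z - c)⁻¹‖ₑ ^ 2 * ‖q z‖ₑ := by
  have hmeas : Measurable ((openAnnulus c a b).indicator fun z ↦ ‖q z‖ₑ) := by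
    classical
    rw [← piecewise_eq_indicator]
    exact (hq.continuousOn.mono (openAnnulus_subset_ball c a b)).enorm.measurable_piecewise
      continuousOn_const (isOpen_openAnnulus c a b).measurableSet
  rw [lintegral_openAnnulus_enorm_inv_sq_mul ha.le hmeas]
  calc ENNReal.ofReal (2 * π * Real.log (b / a)) * ‖q c‖ₑ
    _ = ∫⁻ ρ in Ioo a b, ENNReal.ofReal ρ⁻¹ * (ENNReal.ofReal (2 * π) * ‖q c‖ₑ) := by
        rw [lintegral_mul_const' _ _ (by finiteness), lintegral_Ioo_ofReal_inv ha hab, ← mul_assoc,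
          ← ENNReal.ofReal_mul' Real.two_pi_pos.le, mul_comm (2 * π)]
    _ ≤ ∫⁻ ρ in Ioo a b, ENNReal.ofReal ρ⁻¹ *
          ∫⁻ θ in Ioo (-π) π, ‖q (circleMap c ρ θ)‖ₑ := by
        refine setLIntegral_mono' measurableSet_Ioo fun ρ hρ ↦ ?_
        gcongr
        refine enorm_le_lintegral_enorm_circleMap ?_
        rw [abs_of_pos (ha.trans hρ.1)]
        exact (hq.mono (closedBall_subset_ball hρ.2)).diffContOnCl_ball subset_rfl

/-! ### Logarithmic area -/

/-- The logarithmic area `|dw|² / |w|²`, the Haar measure of the multiplicative group `ℂ \ {0}`: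
it is invariant under `w ↦ w⁻¹`. Its density at `0` takes the junk value `0`. -/
noncomputable def logArea : Measure ℂ := volume.withDensity fun w ↦ ‖w⁻¹‖ₑ ^ 2

theorem abs_det_smul_one (c : ℂ) : |(c • (1 : ℂ →L[ℝ] ℂ)).det| = ‖c‖ ^ 2 := by
  have hmul : ((c • 1 : ℂ →L[ℝ] ℂ) : ℂ →ₗ[ℝ] ℂ) = Algebra.lmul ℝ ℂ c := by
    ext; simp
  rw [ContinuousLinearMap.det, hmul, ← Algebra.norm_apply, Algebra.norm_complex_apply,
    Complex.normSq_eq_norm_sq, abs_of_nonneg (sq_nonneg _)]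

theorem logArea_image {g : ℂ → ℂ} {s : Set ℂ} (hs : IsOpen s) (hg : DifferentiableOn ℂ g s)
    (hinj : InjOn g s) : logArea (g '' s) = ∫⁻ z in s, ‖logDeriv g z‖ₑ ^ 2 := by
  rw [logArea, withDensity_apply', lintegral_image_eq_lintegral_abs_det_fderiv_mul volume
    hs.measurableSet (fun x hx ↦ (hg.differentiableAt
      (hs.mem_nhds hx)).hasDerivAt.complexToReal_fderiv.hasFDerivWithinAt) hinj]
  refine lintegral_congr fun z ↦ ?_
  rw [abs_det_smul_one, ENNReal.ofReal_pow (norm_nonneg _), ofReal_norm, ← mul_pow,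
    ← enorm_mul, logDeriv_apply, div_eq_mul_inv]

theorem logArea_inv {s : Set ℂ} (hs : IsOpen s) (h0 : 0 ∉ s) : logArea s⁻¹ = logArea s := by
  rw [← image_inv_eq_inv, logArea_image hs
    (differentiableOn_inv.mono fun z hz ↦ ne_of_mem_of_not_mem hz h0) inv_injective.injOn,
    logArea, withDensity_apply']
  refine lintegral_congr fun z ↦ ?_
  simp [logDeriv_inv, div_eq_mul_inv, enorm_neg]

theorem logArea_openAnnulus {a b : ℝ} (ha : 0 < a) (hab : a ≤ b) :
    logArea (openAnnulus 0 a b) = ENNReal.ofReal (2 * π * Real.log (b / a)) := by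
  have hone : Measurable ((openAnnulus 0 a b).indicator fun _ ↦ (1 : ℝ≥0∞)) :=
    measurable_const.indicator (isOpen_openAnnulus 0 a b).measurableSet
  have hpolar := lintegral_openAnnulus_enorm_inv_sq_mul ha.le hone
  simp only [sub_zero, mul_one] at hpolar
  rw [setLIntegral_one, Real.volume_Ioo, sub_neg_eq_add, ← two_mul,
    lintegral_mul_const' _ _ ENNReal.ofReal_ne_top, lintegral_Ioo_ofReal_inv ha hab,
    ← ENNReal.ofReal_mul' Real.two_pi_pos.le, mul_comm] at hpolar
  rw [logArea, withDensity_apply', hpolar]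

theorem logDeriv_eq_inv_add_logDeriv_dslope {𝕜 : Type*} [NontriviallyNormedField 𝕜]
    {T : 𝕜 → 𝕜} {c z : 𝕜} (hTc : T c = 0) (hz : z ≠ c) (hT : DifferentiableAt 𝕜 T z)
    (hTz : T z ≠ 0) :
    logDeriv T z = (z - c)⁻¹ + logDeriv (dslope T c) z := by
  have hfactor : (fun w ↦ (w - c) * dslope T c w) = T :=
    funext fun w ↦ sub_smul_dslope_of_zero hTc w
  have hS : DifferentiableAt 𝕜 (dslope T c) z := (differentiableAt_dslope_of_ne hz).2 hT
  have hSz : dslope T c z ≠ 0 := fun h ↦ hTz (by rw [← hfactor]; simp [h])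
  conv_lhs => rw [← hfactor]
  rw [logDeriv_mul (f := (· - c)) z (sub_ne_zero.2 hz) hSz (by fun_prop) hS, logDeriv_apply,
    deriv_sub_const, deriv_id'', one_div]

/- The logarithmic derivative of `T` is `p z / (z - c)` with `p` holomorphic and `p c = 1`; the
mean value property of `p ^ 2` yields the bound. -/
theorem ofReal_log_le_logArea_image_openAnnulus {T : ℂ → ℂ} {c : ℂ} {r R : ℝ} (hr : 0 < r)
    (hrR : r ≤ R) (hT : DifferentiableOn ℂ T (ball c R)) (hinj : InjOn T (ball c R))
    (hTc : T c = 0) :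
    ENNReal.ofReal (2 * π * Real.log (R / r)) ≤ logArea (T '' openAnnulus c r R) := by
  have hc : c ∈ ball c R := mem_ball_self (hr.trans_le hrR)
  have hA : openAnnulus c r R ⊆ ball c R := openAnnulus_subset_ball c r R
  have hS : DifferentiableOn ℂ (dslope T c) (ball c R) :=
    (Complex.differentiableOn_dslope (isOpen_ball.mem_nhds hc)).2 hT
  let p : ℂ → ℂ := fun z ↦ 1 + (z - c) * logDeriv (dslope T c) z
  have hp : DifferentiableOn ℂ p (ball c R) := by
    refine ((differentiableOn_id.sub_const c).mul ?_).const_add 1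
    exact (hS.deriv isOpen_ball).div hS fun z hz ↦
      dslope_ne_zero_of_injOn isOpen_ball hT hinj hc hz
  have hlogDeriv : ∀ z ∈ openAnnulus c r R, (z - c)⁻¹ * p z = logDeriv T z := by
    intro z hz
    have hzc : z ≠ c := by
      rintro rfl
      exact hz.2 (mem_closedBall_self hr.le)
    have hTz : T z ≠ 0 := hTc ▸ hinj.ne (hA hz) hc hzc
    have hTdiff : DifferentiableAt ℂ T z := hT.differentiableAt (isOpen_ball.mem_nhds (hA hz))
    rw [logDeriv_eq_inv_add_logDeriv_dslope hTc hzc hTdiff hTz, mul_add, mul_one,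
      inv_mul_cancel_left₀ (sub_ne_zero.2 hzc)]
  calc ENNReal.ofReal (2 * π * Real.log (R / r))
    _ = ENNReal.ofReal (2 * π * Real.log (R / r)) * ‖p c ^ 2‖ₑ := by simp [p]
    _ ≤ ∫⁻ z in openAnnulus c r R, ‖(z - c)⁻¹‖ₑ ^ 2 * ‖p z ^ 2‖ₑ :=
        ofReal_log_mul_enorm_le_lintegral_openAnnulus hr hrR (hp.pow 2)
    _ = ∫⁻ z in openAnnulus c r R, ‖logDeriv T z‖ₑ ^ 2 := by
        refine setLIntegral_congr_fun (isOpen_openAnnulus c r R).measurableSet fun z hz ↦ ?_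
        rw [← hlogDeriv z hz, enorm_pow, enorm_mul, mul_pow]
    _ = logArea (T '' openAnnulus c r R) :=
        (logArea_image (isOpen_openAnnulus c r R) (hT.mono hA) (hinj.mono hA)).symm

theorem image_openAnnulus_subset_openAnnulus {T : ℂ → ℂ} {c : ℂ} {r R ρ : ℝ} (hrR : r < R)
    (hρ : 0 < ρ) (hinj : InjOn T (ball c R)) (hsurj : SurjOn T (closedBall c r) (closedBall 0 ρ))
    (hmul : ∀ x ∈ ball c R, ∀ y ∈ ball c R, T x * T y ≠ 1) :
    T '' openAnnulus c r R ⊆ openAnnulus 0 ρ ρ⁻¹ := by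
  have hcr : closedBall c r ⊆ ball c R := closedBall_subset_ball hrR
  rintro _ ⟨x, ⟨hxR, hxr⟩, rfl⟩
  have hlow : T x ∉ closedBall 0 ρ := fun hx ↦ by
    obtain ⟨y, hy, hyx⟩ := hsurj hx
    exact hxr (hinj (hcr hy) hxR hyx ▸ hy)
  refine ⟨?_, hlow⟩
  rw [mem_closedBall_zero_iff, not_le] at hlow
  by_contra hhigh
  rw [mem_ball_zero_iff, not_lt] at hhigh
  obtain ⟨y, hy, hyx⟩ := hsurj (show (T x)⁻¹ ∈ closedBall 0 ρ by
    rw [mem_closedBall_zero_iff, norm_inv]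
    exact inv_le_of_inv_le₀ hρ hhigh)
  refine hmul x hxR y (hcr hy) ?_
  rw [hyx, mul_inv_cancel₀ (norm_pos_iff.1 (hρ.trans hlow))]

theorem inv_openAnnulus_zero {a b : ℝ} (ha : 0 < a) (hb : 0 < b) :
    (openAnnulus 0 a b)⁻¹ = openAnnulus 0 b⁻¹ a⁻¹ := by
  ext w
  rcases eq_or_ne w 0 with rfl | hw
  · simp [openAnnulus, ha.le, hb.le]
  · have hw' : 0 < ‖w‖ := norm_pos_iff.2 hw
    simp [openAnnulus, inv_lt_comm₀ hw' hb, lt_inv_comm₀ ha hw', and_comm]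

theorem logArea_le_of_disjoint_inv {W : Set ℂ} {ρ : ℝ} (hW : IsOpen W) (hρ : 0 < ρ)
    (hρ1 : ρ ≤ 1) (hsub : W ⊆ openAnnulus 0 ρ ρ⁻¹) (hdisj : Disjoint W W⁻¹) :
    logArea W ≤ ENNReal.ofReal (2 * π * Real.log ρ⁻¹) := by
  have h0 : 0 ∉ W := fun h ↦ (hsub h).2 (mem_closedBall_self hρ.le)
  have hinv_sub : W⁻¹ ⊆ openAnnulus 0 ρ ρ⁻¹ := by
    have hsub_inv := inv_subset_inv.2 hsub
    rwa [inv_openAnnulus_zero hρ (inv_pos.2 hρ), inv_inv] at hsub_inv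
  have hdouble : 2 * logArea W ≤ 2 * ENNReal.ofReal (2 * π * Real.log ρ⁻¹) :=
    calc 2 * logArea W = logArea W + logArea W⁻¹ := by rw [logArea_inv hW h0, two_mul]
      _ = logArea (W ∪ W⁻¹) := (measure_union' hdisj hW.measurableSet).symm
      _ ≤ logArea (openAnnulus 0 ρ ρ⁻¹) := measure_mono (union_subset hsub hinv_sub)
      _ = ENNReal.ofReal (2 * π * Real.log (ρ⁻¹ / ρ)) :=
          logArea_openAnnulus hρ (hρ1.trans (one_le_inv₀ hρ |>.2 hρ1))
      _ = 2 * ENNReal.ofReal (2 * π * Real.log ρ⁻¹) := by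
          rw [div_eq_mul_inv, ← sq, Real.log_pow, ← ENNReal.ofReal_ofNat 2,
            ← ENNReal.ofReal_mul zero_le_two]
          push_cast
          ring_nf
  exact (ENNReal.mul_le_mul_iff_right two_ne_zero ENNReal.ofNat_ne_top).1 hdouble

/-! ### The lower bound -/

theorem eventually_surjOn_closedBall_of_hasStrictDerivAt {𝕜 : Type*} [NontriviallyNormedField 𝕜]
    [CompleteSpace 𝕜] {f : 𝕜 → 𝕜} {f' c : 𝕜} {k : ℝ} (hf : HasStrictDerivAt f f' c)
    (hk0 : 0 ≤ k) (hk : k < ‖f'‖) :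
    ∀ᶠ r in 𝓝[>] (0 : ℝ), SurjOn f (closedBall c r) (closedBall (f c) (k * r)) := by
  have hf' : f' ≠ 0 := norm_pos_iff.1 (hk0.trans_lt hk)
  let e : 𝕜 ≃L[𝕜] 𝕜 := ContinuousLinearEquiv.unitsEquivAut 𝕜 (Units.mk0 f' hf')
  have he : HasStrictFDerivAt f (e : 𝕜 →L[𝕜] 𝕜) c := by
    convert hf.hasStrictFDerivAt using 1
    ext
    simp [e]
  have hnorm : (e.toNonlinearRightInverse.nnnorm : ℝ)⁻¹ = ‖f'‖ := by
    have hsymm : (e.symm : 𝕜 →L[𝕜] 𝕜) = ContinuousLinearMap.toSpanSingleton 𝕜 f'⁻¹ := by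
      ext
      simp [e]
    change ‖(e.symm : 𝕜 →L[𝕜] 𝕜)‖⁻¹ = ‖f'‖
    rw [hsymm, ContinuousLinearMap.norm_toSpanSingleton, norm_inv, inv_inv]
  obtain ⟨s, hs, happrox⟩ := he.approximates_deriv_on_nhds (c := (‖f'‖ - k).toNNReal)
    (.inr (Real.toNNReal_pos.2 (sub_pos.2 hk)))
  obtain ⟨ε, hε, hball⟩ := nhds_basis_closedBall.mem_iff.1 hs
  filter_upwards [Ioc_mem_nhdsGT hε] with r hr
  have hsurj := happrox.surjOn_closedBall_of_nonlinearRightInverse e.toNonlinearRightInverse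
    hr.1.le ((closedBall_subset_closedBall hr.2).trans hball)
  rwa [hnorm, Real.coe_toNNReal _ (sub_nonneg.2 hk.le), sub_sub_cancel] at hsurj

section Disc

variable {c : ℂ} {R : ℝ}

theorem mul_le_of_mul_ne_one_of_surjOn_closedBall {T : ℂ → ℂ} {r ρ : ℝ} (hr : 0 < r) (hrR : r < R)
    (hρ : 0 < ρ) (hρ1 : ρ ≤ 1) (hT : DifferentiableOn ℂ T (ball c R)) (hinj : InjOn T (ball c R))
    (hTc : T c = 0) (hmul : ∀ x ∈ ball c R, ∀ y ∈ ball c R, T x * T y ≠ 1)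
    (hsurj : SurjOn T (closedBall c r) (closedBall 0 ρ)) : ρ * R ≤ r := by
  have hA : openAnnulus c r R ⊆ ball c R := openAnnulus_subset_ball c r R
  have hsub := image_openAnnulus_subset_openAnnulus hrR hρ hinj hsurj hmul
  have hdisj : Disjoint (T '' openAnnulus c r R) (T '' openAnnulus c r R)⁻¹ := by
    rw [Set.disjoint_left]
    rintro _ ⟨x, hx, rfl⟩ ⟨y, hy, hyx⟩
    refine hmul x (hA hx) y (hA hy) ?_
    have hTx : T x ≠ 0 := fun h ↦ (hsub ⟨x, hx, rfl⟩).2 (h ▸ mem_closedBall_self hρ.le)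
    rw [hyx, mul_inv_cancel₀ hTx]
  have hopen := isOpen_image_of_injOn (isOpen_openAnnulus c r R) (hT.mono hA) (hinj.mono hA)
  have harea : ENNReal.ofReal (2 * π * Real.log (R / r)) ≤
      ENNReal.ofReal (2 * π * Real.log ρ⁻¹) :=
    (ofReal_log_le_logArea_image_openAnnulus hr hrR.le hT hinj hTc).trans
      (logArea_le_of_disjoint_inv hopen hρ hρ1 hsub hdisj)
  have hRr : 1 < R / r := (one_lt_div hr).2 hrR
  have hlog_pos : 0 < 2 * π * Real.log (R / r) := mul_pos Real.two_pi_pos (Real.log_pos hRr)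
  have hlog : Real.log (R / r) ≤ Real.log ρ⁻¹ := le_of_mul_le_mul_left
    ((ENNReal.ofReal_le_ofReal_iff'.1 harea).resolve_right hlog_pos.not_ge) Real.two_pi_pos
  rwa [Real.log_le_log_iff (one_pos.trans hRr) (inv_pos.2 hρ), div_le_iff₀ hr,
    le_inv_mul_iff₀ hρ] at hlog

theorem mul_norm_deriv_le_one_of_mul_ne_one {T : ℂ → ℂ} (hR : 0 < R)
    (hT : DifferentiableOn ℂ T (ball c R)) (hinj : InjOn T (ball c R)) (hTc : T c = 0)
    (hmul : ∀ x ∈ ball c R, ∀ y ∈ ball c R, T x * T y ≠ 1) :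
    R * ‖deriv T c‖ ≤ 1 := by
  rw [← le_div_iff₀' hR]
  refine le_of_forall_lt_imp_le_of_dense fun k hk ↦ ?_
  rcases le_or_gt k 0 with hk0 | hk0
  · exact hk0.trans (by positivity)
  have hstrict : HasStrictDerivAt T (deriv T c) c :=
    (hT.analyticAt (ball_mem_nhds c hR)).hasStrictDerivAt
  have hsmall : ∀ᶠ r in 𝓝[>] (0 : ℝ), k * r ≤ 1 ∧ r < R := by
    refine eventually_nhdsWithin_of_eventually_nhds (.and ?_ (eventually_lt_nhds hR))
    exact (continuous_const_mul k).tendsto' 0 0 (mul_zero k) |>.eventually_le_const one_pos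
  obtain ⟨r, hsurj, ⟨hkr, hrR⟩, hr⟩ :=
    ((eventually_surjOn_closedBall_of_hasStrictDerivAt hstrict hk0.le hk).and
      (hsmall.and self_mem_nhdsWithin)).exists
  have hle := mul_le_of_mul_ne_one_of_surjOn_closedBall hr hrR (mul_pos hk0 hr) hkr hT hinj hTc
    hmul (hTc ▸ hsurj)
  rw [le_div_iff₀ hR]
  refine le_of_mul_le_mul_right ?_ hr
  linarith

theorem mul_norm_deriv_le_two_mul_norm_of_add_ne_zero {h : ℂ → ℂ} (hR : 0 < R)
    (hh : DifferentiableOn ℂ h (ball c R)) (hinj : InjOn h (ball c R))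
    (hadd : ∀ x ∈ ball c R, ∀ y ∈ ball c R, h x + h y ≠ 0) :
    R * ‖deriv h c‖ ≤ 2 * ‖h c‖ := by
  have hc : c ∈ ball c R := mem_ball_self hR
  have hhc : h c ≠ 0 := fun h0 ↦ hadd c hc c hc (by simp [h0])
  have hdiff (x : ℂ) (hx : x ∈ ball c R) := hh.differentiableAt (isOpen_ball.mem_nhds hx)
  have hcayley : deriv (fun x ↦ (h x - h c) / (h x + h c)) c = deriv h c / (2 * h c) := by
    rw [deriv_fun_div ((hdiff c hc).sub_const _) ((hdiff c hc).add_const _) (hadd c hc c hc),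
      deriv_sub_const, deriv_add_const]
    field_simp
    ring
  have hle : R * ‖deriv (fun x ↦ (h x - h c) / (h x + h c)) c‖ ≤ 1 := by
    refine mul_norm_deriv_le_one_of_mul_ne_one hR
      ((hh.sub_const _).div (hh.add_const _) fun x hx ↦ hadd x hx c hc) ?_ (by simp) ?_
    · intro x hx y hy hxy
      simp only [div_eq_div_iff (hadd x hx c hc) (hadd y hy c hc)] at hxy
      exact hinj hx hy (mul_left_cancel₀ hhc (by linear_combination hxy / 2))
    · intro x hx y hy hxy
      rw [div_mul_div_comm,
        div_eq_one_iff_eq (mul_ne_zero (hadd x hx c hc) (hadd y hy c hc))] at hxy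
      exact mul_ne_zero hhc (hadd x hx y hy) (by linear_combination -hxy / 2)
  rwa [hcayley, norm_div, norm_mul, Complex.norm_ofNat, mul_div_assoc', div_le_one (by positivity)]
    at hle

theorem exists_differentiableOn_exp_eq_of_ne_zero {G : ℂ → ℂ}
    (hG : DifferentiableOn ℂ G (ball c R)) (hne : ∀ x ∈ ball c R, G x ≠ 0) :
    ∃ L : ℂ → ℂ, DifferentiableOn ℂ L (ball c R) ∧ ∀ x ∈ ball c R, Complex.exp (L x) = G x := by
  obtain ⟨L, hL⟩ := ((hG.deriv isOpen_ball).div hG hne).isExactOn_ball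
  have hLdiff : DifferentiableOn ℂ L (ball c R) := fun x hx ↦
    (hL x hx).differentiableAt.differentiableWithinAt
  have hlogDeriv : EqOn (logDeriv G) (logDeriv (Complex.exp ∘ L)) (ball c R) := fun x hx ↦ by
    rw [logDeriv_comp (by fun_prop) (hL x hx).differentiableAt, (hL x hx).deriv,
      Complex.logDeriv_exp]
    simp [logDeriv]
  obtain ⟨a, ha, hGa⟩ := (logDeriv_eqOn_iff hG hLdiff.cexp isOpen_ball
    (convex_ball c R).isPreconnected (fun _ _ ↦ Complex.exp_ne_zero _) hne).1 hlogDeriv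
  refine ⟨fun x ↦ Complex.log a + L x, hLdiff.const_add _, fun x hx ↦ ?_⟩
  rw [Complex.exp_add, Complex.exp_log ha]
  exact (hGa hx).symm

theorem exists_differentiableOn_pow_eq_of_ne_zero {G : ℂ → ℂ} {n : ℕ} (hn : n ≠ 0)
    (hG : DifferentiableOn ℂ G (ball c R)) (hne : ∀ x ∈ ball c R, G x ≠ 0) :
    ∃ h : ℂ → ℂ, DifferentiableOn ℂ h (ball c R) ∧ ∀ x ∈ ball c R, h x ^ n = G x := by
  obtain ⟨L, hL, hexp⟩ := exists_differentiableOn_exp_eq_of_ne_zero hG hne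
  refine ⟨fun x ↦ Complex.exp (L x / n), (hL.div_const _).cexp, fun x hx ↦ ?_⟩
  rw [← Complex.exp_nat_mul, mul_div_cancel₀ _ (Nat.cast_ne_zero.2 hn), hexp x hx]

theorem mul_norm_deriv_le_four_mul_norm_of_ne_zero {G : ℂ → ℂ} (hR : 0 < R)
    (hG : DifferentiableOn ℂ G (ball c R)) (hinj : InjOn G (ball c R))
    (hne : ∀ x ∈ ball c R, G x ≠ 0) : R * ‖deriv G c‖ ≤ 4 * ‖G c‖ := by
  obtain ⟨h, hh, hsq⟩ := exists_differentiableOn_pow_eq_of_ne_zero two_ne_zero hG hne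
  have hc : c ∈ ball c R := mem_ball_self hR
  have hderiv : deriv G c = 2 * h c * deriv h c := by
    have hG_eq : G =ᶠ[𝓝 c] fun x ↦ h x ^ 2 :=
      eventually_of_mem (ball_mem_nhds c hR) fun x hx ↦ (hsq x hx).symm
    rw [hG_eq.deriv_eq, deriv_fun_pow (hh.differentiableAt (ball_mem_nhds c hR))]
    simp
  have hsqrt_inj : InjOn h (ball c R) := fun x hx y hy hxy ↦
    hinj hx hy (by rw [← hsq x hx, ← hsq y hy, hxy])
  have hadd : ∀ x ∈ ball c R, ∀ y ∈ ball c R, h x + h y ≠ 0 := by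
    intro x hx y hy hxy
    have hneg : h x = -h y := eq_neg_of_add_eq_zero_left hxy
    obtain rfl : x = y := hinj hx hy (by rw [← hsq x hx, ← hsq y hy, hneg, neg_sq])
    exact hne x hx (by rw [← hsq x hx, self_eq_neg.1 hneg, zero_pow two_ne_zero])
  calc R * ‖deriv G c‖ = 2 * ‖h c‖ * (R * ‖deriv h c‖) := by
        rw [hderiv, norm_mul, norm_mul, Complex.norm_ofNat]
        ring
    _ ≤ 2 * ‖h c‖ * (2 * ‖h c‖) := by
        refine mul_le_mul_of_nonneg_left ?_ (by positivity)
        exact mul_norm_deriv_le_two_mul_norm_of_add_ne_zero hR hh hsqrt_inj hadd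
    _ = 4 * ‖G c‖ := by
        rw [← hsq c hc, norm_pow]
        ring

theorem mul_norm_deriv_le_four_mul_dist_of_notMem_image {f : ℂ → ℂ} {w : ℂ} (hR : 0 < R)
    (hf : DifferentiableOn ℂ f (ball c R)) (hinj : InjOn f (ball c R))
    (hw : w ∉ f '' ball c R) : R * ‖deriv f c‖ ≤ 4 * dist (f c) w := by
  have hle := mul_norm_deriv_le_four_mul_norm_of_ne_zero hR (hf.sub_const w)
    (fun x hx y hy hxy ↦ hinj hx hy (sub_left_injective hxy))
    fun x hx h ↦ hw ⟨x, hx, sub_eq_zero.1 h⟩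
  rwa [deriv_sub_const, ← dist_eq_norm] at hle

theorem mul_norm_deriv_div_four_le_infDist_frontier_image_ball {f : ℂ → ℂ} (hR : 0 < R)
    (hf : DifferentiableOn ℂ f (ball c R)) (hinj : InjOn f (ball c R)) :
    R * ‖deriv f c‖ / 4 ≤ infDist (f c) (frontier (f '' ball c R)) := by
  have hfrontier : (frontier (f '' ball c R)).Nonempty := nonempty_frontier_iff.2
    ⟨⟨f c, mem_image_of_mem f (mem_ball_self hR)⟩, image_ball_ne_univ_of_injOn hR hf hinj⟩
  rw [le_infDist hfrontier]
  intro w hw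
  rw [(isOpen_image_of_injOn isOpen_ball hf hinj).frontier_eq] at hw
  rw [div_le_iff₀' four_pos]
  exact mul_norm_deriv_le_four_mul_dist_of_notMem_image hR hf hinj hw.2

end Disc

/-- Koebe quarter theorem and the Schwarz-lemma upper bound: for a conformal map `f` of the
unit disc onto `Ω` with `f 0 = z`, the distance from `z` to `∂Ω` is between `|f'(0)|/4` and
`|f'(0)|`. -/
theorem stmt_12 (f : ℂ → ℂ) (z : ℂ)
    (hf : DifferentiableOn ℂ f (ball 0 1))
    (hinj : Set.InjOn f (ball 0 1)) (hf0 : f 0 = z) :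
    ‖deriv f 0‖ / 4 ≤ infDist z (frontier (f '' ball 0 1)) ∧
      infDist z (frontier (f '' ball 0 1)) ≤ ‖deriv f 0‖ := by
  subst hf0
  have hlower := mul_norm_deriv_div_four_le_infDist_frontier_image_ball one_pos hf hinj
  have hupper := infDist_frontier_image_ball_le one_pos hf hinj
  rw [one_mul] at hlower hupper
  exact ⟨hlower, hupper⟩
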